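/- Let n ≥ 3, let D be a rich domain, and suppose there exists an efficient, individually rational and obviously strategy-proof rule f : D^n → M satisfying equity under unanimous acclaim. Then the connectivity graph G on O (with an edge between o and o' iff o ∼ o' in D) is a tree; moreover G is a line: every object of O lies on the unique path of G connecting the top objects of the two completely reversed preferences of D. -/

import Mathlib

/-!
The proof rests on one property of the domain: among any three objects, some object is never
ranked last of the three by a preference of `D` (`exists_mid`). Write `Mid D x y z` when `y` is
never the last of `x, y, z`.

*Three agents.* Every object is the top of some preference in `D`, so all agents outside a given
triple can be made null; individual rationality then makes the rule reallocate only within the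
triple. Were each of the three objects last for some preference, then, up to relabelling, the
restriction of `D` to the triple would contain either `abc, bca, cab` or `abc, acb, bca, cba`.
Obvious strategy-proofness is used through `osp_cut`: on a box with two preferences per agent, the
first history at which the two plans of some agent part yields an agent for whom every outcome of
one preference is weakly better than every outcome of the other, and conversely, unless the rule
is constant on the box. In both situations equity, efficiency, individual rationality and
strategy-proofness pin down enough outcomes to exclude all three agents (`no_condorcet`,
`no_two_sided`).

*Graph.* If `x ∼ y ∼ z` then `Mid D x y z`. From `Mid D a b c` and `Mid D b c d` follows
`Mid D a b d`; hence along a path `v, w, …, u` one gets `Mid D v w u`. If `u, v, w, …` were a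
cycle, then also `Mid D u v w`, and a preference with top `u` violates one of the two. Finally,
let `p, p'` be completely reversed and let a walk lead from the top of `p` to the top of `p'` while
avoiding `o`. Some edge `x y` of it satisfies `x P o P y`; then `y` is last for `p`, `x` is last
for `p'`, and `o` is last for a preference with first two objects `x, y`.
-/

/-- A preference is a strict linear order on the objects `Fin n`, encoded by its
rank function: `p o < p o'` means object `o` is strictly preferred to `o'`. -/
abbrev Pref (n : ℕ) := Fin n ≃ Fin n

/-- `o` is strictly preferred to `o'` under `p`. -/
def prefers {n : ℕ} (p : Pref n) (o o' : Fin n) : Prop := p o < p o'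

/-- `o` is weakly preferred to `o'` under `p` (i.e. `o P o'` or `o = o'`). -/
def weakPref {n : ℕ} (p : Pref n) (o o' : Fin n) : Prop := p o ≤ p o'

/-- The top-ranked object `r_1(p)`. -/
def topObj {n : ℕ} [NeZero n] (p : Pref n) : Fin n := p.symm 0

/-- The second-ranked object `r_2(p)`. -/
def secondObj {n : ℕ} [NeZero n] (p : Pref n) : Fin n := p.symm 1

/-- The `p`-best object of a (nonempty) finite set `S`: `max^p S`. -/
noncomputable def best {n : ℕ} [NeZero n] (p : Pref n) (S : Finset (Fin n)) : Fin n :=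
  (S.toList.argmin (fun o => p o)).getD 0

/-- A profile belongs to the domain `D` coordinatewise. -/
def inD {n : ℕ} (D : Set (Pref n)) (P : Fin n → Pref n) : Prop := ∀ i, P i ∈ D

/-- Individual rationality of an allocation at a profile: each agent `i` weakly
prefers her assigned object to her endowment `o_i = i`. -/
def IRAt {n : ℕ} (P : Fin n → Pref n) (m : Fin n → Fin n) : Prop :=
  ∀ i, weakPref (P i) (m i) i

/-- `m'` Pareto dominates `m` at profile `P`. -/
def ParetoDom {n : ℕ} (P : Fin n → Pref n) (m' m : Fin n → Fin n) : Prop :=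
  (∀ i, weakPref (P i) (m' i) (m i)) ∧ ∃ j, prefers (P j) (m' j) (m j)

/-- Pareto efficiency of an allocation at a profile. -/
def EffAt {n : ℕ} (P : Fin n → Pref n) (m : Fin n → Fin n) : Prop :=
  ¬ ∃ m' : Fin n → Fin n, Function.Bijective m' ∧ ParetoDom P m' m

/-- A rule maps profiles from the domain to allocations (bijections `N → O`). -/
def IsRule {n : ℕ} (D : Set (Pref n)) (f : (Fin n → Pref n) → (Fin n → Fin n)) : Prop :=
  ∀ P, inD D P → Function.Bijective (f P)

def Efficient {n : ℕ} (D : Set (Pref n)) (f : (Fin n → Pref n) → (Fin n → Fin n)) : Prop :=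
  ∀ P, inD D P → EffAt P (f P)

def IndRational {n : ℕ} (D : Set (Pref n)) (f : (Fin n → Pref n) → (Fin n → Fin n)) : Prop :=
  ∀ P, inD D P → IRAt P (f P)

def StrategyProof {n : ℕ} (D : Set (Pref n)) (f : (Fin n → Pref n) → (Fin n → Fin n)) : Prop :=
  ∀ P, inD D P → ∀ i, ∀ p' ∈ D, weakPref (P i) (f P i) (f (Function.update P i p') i)

/-- The active agents at profile `P` (those whose top object differs from their
endowment); since `o_i = i`, the set of active objects coincides with it. -/
def activeAgents {n : ℕ} [NeZero n] (P : Fin n → Pref n) : Finset (Fin n) :=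
  Finset.univ.filter (fun i => topObj (P i) ≠ i)

/-- Agent `i` is the acclaimed agent at profile `P`. -/
def acclaimed {n : ℕ} [NeZero n] (P : Fin n → Pref n) (i : Fin n) : Prop :=
  2 < (activeAgents P).card ∧ i ∈ activeAgents P ∧
    best (P i) (activeAgents P) ≠ i ∧
    ∀ j ∈ activeAgents P, j ≠ i → best (P j) (activeAgents P) = i

/-- Equity under unanimous acclaim. -/
def EquityUA {n : ℕ} [NeZero n] (D : Set (Pref n))
    (f : (Fin n → Pref n) → (Fin n → Fin n)) : Prop :=
  ∀ P, inD D P → ∀ i, acclaimed P i → f P i = best (P i) (activeAgents P)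

/-- Agents `i` and `j` form the acclaimed pair at profile `P`. -/
def acclaimedPair {n : ℕ} [NeZero n] (P : Fin n → Pref n) (i j : Fin n) : Prop :=
  ∃ Ni Nj : Finset (Fin n),
    Disjoint Ni Nj ∧ Ni ∪ Nj = activeAgents P ∧ Ni.card = Nj.card ∧ 1 < Ni.card ∧
    i ∈ Nj ∧ j ∈ Ni ∧
    (∀ l ∈ Ni, best (P l) (activeAgents P) = i) ∧
    (∀ l ∈ Nj, best (P l) (activeAgents P) = j)

/-- Equity under bipartite acclaim. -/
def EquityBA {n : ℕ} [NeZero n] (D : Set (Pref n))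
    (f : (Fin n → Pref n) → (Fin n → Fin n)) : Prop :=
  ∀ P, inD D P → ∀ i j, acclaimedPair P i j → f P i = j ∨ f P j = i

/-- Equity⁺ under bipartite acclaim. -/
def EquityPlusBA {n : ℕ} [NeZero n] (D : Set (Pref n))
    (f : (Fin n → Pref n) → (Fin n → Fin n)) : Prop :=
  ∀ P, inD D P → ∀ i j, acclaimedPair P i j → f P i = j ∧ f P j = i

/-- Single-peakedness of `p` w.r.t. the linear order on objects encoded by the
position permutation `σ` (`o < o'` iff `σ o < σ o'`). -/
def singlePeaked {n : ℕ} [NeZero n] (σ : Fin n ≃ Fin n) (p : Pref n) : Prop :=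
  ∀ o o' : Fin n,
    ((σ o' < σ o ∧ σ o < σ (topObj p)) ∨ (σ (topObj p) < σ o ∧ σ o < σ o')) →
    prefers p o o'

/-- The full single-peaked domain `D_<`. -/
def spDomain {n : ℕ} [NeZero n] (σ : Fin n ≃ Fin n) : Set (Pref n) :=
  {p | singlePeaked σ p}

/-- `D` is a single-peaked domain. -/
def IsSPDomain {n : ℕ} [NeZero n] (D : Set (Pref n)) : Prop :=
  ∃ σ : Fin n ≃ Fin n, D ⊆ spDomain σ

/-- Objects `o` and `o'` are connected in `D`: `o ∼ o'`. -/
def connectedObj {n : ℕ} [NeZero n] (D : Set (Pref n)) (o o' : Fin n) : Prop :=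
  ∃ p ∈ D, ∃ p' ∈ D, topObj p = o ∧ secondObj p = o' ∧ topObj p' = o' ∧ secondObj p' = o

/-- `D` is path-connected. -/
def pathConnected {n : ℕ} [NeZero n] (D : Set (Pref n)) : Prop :=
  ∀ o o' : Fin n, o ≠ o' → ∃ l : List (Fin n),
    l.Nodup ∧ l.head? = some o ∧ l.getLast? = some o' ∧ l.Chain' (connectedObj D)

/-- `p` and `p'` rank all objects in exactly opposite orders. -/
def reversedPair {n : ℕ} (p p' : Pref n) : Prop :=
  ∀ o o', prefers p o o' ↔ prefers p' o' o

/-- A rich domain: path-connected and containing two completely reversed preferences. -/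
def richDomain {n : ℕ} [NeZero n] (D : Set (Pref n)) : Prop :=
  pathConnected D ∧ ∃ p ∈ D, ∃ p' ∈ D, reversedPair p p'

/-- The restriction `→(x,y,z) ∈ R(D)`: whenever `x` is the best of `{x,y,z}`,
`y` is ranked above `z`. -/
def RestrR {n : ℕ} [NeZero n] (D : Set (Pref n)) (x y z : Fin n) : Prop :=
  ∀ p ∈ D, best p {x, y, z} = x → prefers p y z

/-- The ternary relation `(x,y,z) ∈ B(D)`. -/
def RelB {n : ℕ} [NeZero n] (D : Set (Pref n)) (x y z : Fin n) : Prop :=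
  RestrR D x y z ∧ RestrR D z y x

/-! ### Extensive game forms and obvious strategy-proofness -/

/-- An extensive game form: a finite rooted tree of histories (lists of actions,
prefix-closed), a player function and an outcome function on terminal histories. -/
structure GameForm (n : ℕ) where
  hist : Finset (List ℕ)
  root_mem : [] ∈ hist
  prefix_closed : ∀ h a, h ++ [a] ∈ hist → h ∈ hist
  player : List ℕ → Fin n
  outcome : List ℕ → (Fin n → Fin n)

/-- A strategy chooses an action at every history. -/
abbrev Strategy : Type := List ℕ → ℕ

/-- Terminal histories of the game form. -/
def GameForm.Terminal {n : ℕ} (Γ : GameForm n) (h : List ℕ) : Prop :=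
  h ∈ Γ.hist ∧ ∀ a, h ++ [a] ∉ Γ.hist

/-- A strategy of agent `i` is valid if it always chooses a feasible action. -/
def GameForm.ValidStrat {n : ℕ} (Γ : GameForm n) (i : Fin n) (s : Strategy) : Prop :=
  ∀ h ∈ Γ.hist, ¬ Γ.Terminal h → Γ.player h = i → h ++ [s h] ∈ Γ.hist

/-- Play from `h` under the strategy profile `s` reaches history `h'`. -/
inductive GameForm.Reaches {n : ℕ} (Γ : GameForm n) (s : Fin n → Strategy) :
    List ℕ → List ℕ → Prop
  | refl (h : List ℕ) : GameForm.Reaches Γ s h h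
  | step {h h' : List ℕ} : GameForm.Reaches Γ s h h' → h' ∈ Γ.hist → ¬ Γ.Terminal h' →
      GameForm.Reaches Γ s h (h' ++ [s (Γ.player h') h'])

/-- `o` belongs to the feasible set `X_i(h, s_i)` of agent `i` at history `h`
given her strategy `si`. -/
def GameForm.Feas {n : ℕ} (Γ : GameForm n) (i : Fin n) (h : List ℕ) (si : Strategy)
    (o : Fin n) : Prop :=
  ∃ s : Fin n → Strategy, (∀ j, Γ.ValidStrat j (s j)) ∧ s i = si ∧
    ∃ t, Γ.Reaches s h t ∧ Γ.Terminal t ∧ Γ.outcome t i = o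

/-- `h` is a decision node of `i` reachable (on-path) when `i` plays `si`. -/
def GameForm.ReachableNode {n : ℕ} (Γ : GameForm n) (i : Fin n) (si : Strategy)
    (h : List ℕ) : Prop :=
  h ∈ Γ.hist ∧ ¬ Γ.Terminal h ∧ Γ.player h = i ∧
    ∃ s : Fin n → Strategy, (∀ j, Γ.ValidStrat j (s j)) ∧ s i = si ∧ Γ.Reaches s [] h

/-- `si` obviously dominates `si'` at preference `p`: at every earliest point of
departure, the worst feasible outcome under `si` is weakly preferred to the best
feasible outcome under `si'`. -/
def GameForm.ObvDom {n : ℕ} (Γ : GameForm n) (i : Fin n) (p : Pref n)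
    (si si' : Strategy) : Prop :=
  ∀ h, Γ.ReachableNode i si h → Γ.ReachableNode i si' h → si h ≠ si' h →
    ∀ o o', Γ.Feas i h si o → Γ.Feas i h si' o' → weakPref p o o'

/-- Obvious strategy-proofness of a rule `f` on domain `D`. -/
def OSP {n : ℕ} (D : Set (Pref n)) (f : (Fin n → Pref n) → (Fin n → Fin n)) : Prop :=
  ∃ (Γ : GameForm n) (S : Fin n → Pref n → Strategy),
    (∀ i p, p ∈ D → Γ.ValidStrat i (S i p)) ∧
    (∀ i p, p ∈ D → ∀ s', Γ.ValidStrat i s' → Γ.ObvDom i p (S i p) s') ∧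
    (∀ P : Fin n → Pref n, inD D P →
      ∃ t, Γ.Reaches (fun j => S j (P j)) [] t ∧ Γ.Terminal t ∧ Γ.outcome t = f P)

/-! ### The crawler, the designator, and top trading cycles -/

/-- The running state of the crawler/designator algorithms: the sub-allocation of
objects currently held by remaining agents, and the final assignments so far. -/
structure AlgState (n : ℕ) where
  held : Fin n → Option (Fin n)
  res : Fin n → Option (Fin n)

/-- The object currently held by agent `i`. -/
def heldObj {n : ℕ} [NeZero n] (st : AlgState n) (i : Fin n) : Fin n := (st.held i).getD 0

/-- The remaining agents. -/
def remAgents {n : ℕ} (st : AlgState n) : Finset (Fin n) :=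
  Finset.univ.filter (fun i => (st.held i).isSome)

/-- The remaining objects. -/
def remObjs {n : ℕ} [NeZero n] (st : AlgState n) : Finset (Fin n) :=
  (remAgents st).image (heldObj st)

/-- The object of `S` adjacently larger than `o` w.r.t. the order `σ`. -/
noncomputable def adjLarger {n : ℕ} (σ : Fin n ≃ Fin n) (S : Finset (Fin n)) (o : Fin n) : Fin n :=
  ((S.filter (fun o' => σ o < σ o')).toList.argmin (fun o' => σ o')).getD o

/-- The agent `i^s` leaving at the current step: the remaining agent holding the
`σ`-smallest object among those whose best remaining object is weakly below their
held object. -/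
noncomputable def leaver {n : ℕ} [NeZero n] (σ : Fin n ≃ Fin n) (P : Fin n → Pref n)
    (st : AlgState n) : Option (Fin n) :=
  ((remAgents st).filter
      (fun i => σ (best (P i) (remObjs st)) ≤ σ (heldObj st i))).toList.argmin
    (fun i => σ (heldObj st i))

/-- One step of the crawler: the leaving agent takes her best remaining object,
and every remaining agent holding an object weakly above the taken object and
strictly below the leaver's object crawls to the adjacently larger object. -/
noncomputable def crawlerStep {n : ℕ} [NeZero n] (σ : Fin n ≃ Fin n) (P : Fin n → Pref n)
    (st : AlgState n) : AlgState n :=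
  match leaver σ P st with
  | none => st
  | some is =>
    let taken := best (P is) (remObjs st)
    { held := fun j =>
        if j = is then none
        else if (st.held j).isSome = true ∧ σ taken ≤ σ (heldObj st j) ∧
            σ (heldObj st j) < σ (heldObj st is) then
          some (adjLarger σ (remObjs st) (heldObj st j))
        else st.held j,
      res := Function.update st.res is (some taken) }

/-- Initially every agent holds her endowment `o_i = i`. -/
def crawlerInit (n : ℕ) : AlgState n := ⟨fun i => some i, fun _ => none⟩

/-- The crawler rule w.r.t. the object order `σ`. -/
noncomputable def crawler {n : ℕ} [NeZero n] (σ : Fin n ≃ Fin n) (P : Fin n → Pref n) :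
    Fin n → Fin n :=
  fun i => (((crawlerStep σ P)^[n] (crawlerInit n)).res i).getD 0

/-- `τ(i)`: the active agent whose endowment is `max^{P_i} O_{m̄⁰}`. -/
noncomputable def desTau {n : ℕ} [NeZero n] (P : Fin n → Pref n) (i : Fin n) : Fin n :=
  best (P i) (activeAgents P)

/-- Stage I of the designator: null agents receive their endowments and leave. -/
def desInit {n : ℕ} [NeZero n] (P : Fin n → Pref n) : AlgState n :=
  { held := fun i => if topObj (P i) = i then none else some i,
    res := fun i => if topObj (P i) = i then some i else none }

/-- One step of Stage II of the designator: the leaving agent `i^s` takes her best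
remaining object; if `τ(i^s)` is remaining and holds an object weakly above the
taken object and strictly below `i^s`'s held object, then `τ(i^s)` directly
inherits `i^s`'s object and only agents below `τ(i^s)` crawl (designating);
otherwise the crawling updating applies. -/
noncomputable def desStep {n : ℕ} [NeZero n] (σ : Fin n ≃ Fin n) (P : Fin n → Pref n)
    (st : AlgState n) : AlgState n :=
  match leaver σ P st with
  | none => st
  | some is =>
    let taken := best (P is) (remObjs st)
    let t := desTau P is
    if (st.held t).isSome = true ∧ σ taken ≤ σ (heldObj st t) ∧
        σ (heldObj st t) < σ (heldObj st is) then
      { held := fun j =>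
          if j = is then none
          else if j = t then some (heldObj st is)
          else if (st.held j).isSome = true ∧ σ taken ≤ σ (heldObj st j) ∧
              σ (heldObj st j) < σ (heldObj st t) then
            some (adjLarger σ (remObjs st) (heldObj st j))
          else st.held j,
        res := Function.update st.res is (some taken) }
    else
      { held := fun j =>
          if j = is then none
          else if (st.held j).isSome = true ∧ σ taken ≤ σ (heldObj st j) ∧
              σ (heldObj st j) < σ (heldObj st is) then
            some (adjLarger σ (remObjs st) (heldObj st j))
          else st.held j,
        res := Function.update st.res is (some taken) }

/-- The designator rule w.r.t. the object order `σ`. -/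
noncomputable def designator {n : ℕ} [NeZero n] (σ : Fin n ≃ Fin n) (P : Fin n → Pref n) :
    Fin n → Fin n :=
  fun i => (((desStep σ P)^[n] (desInit P)).res i).getD 0

/-- One round of top trading cycles: every remaining agent points to the owner of
her favorite remaining object (owner of object `o` is agent `o`), and every agent
lying on a pointing cycle receives the object she points to and leaves. -/
noncomputable def ttcStep {n : ℕ} [NeZero n] (P : Fin n → Pref n) (res : Fin n → Option (Fin n)) :
    Fin n → Option (Fin n) :=
  let rem : Finset (Fin n) := Finset.univ.filter (fun i => res i = none)
  let pt : Fin n → Fin n := fun i => best (P i) rem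
  fun i =>
    match res i with
    | some o => some o
    | none =>
      if (List.range (n + 1)).any (fun k => (k != 0) && (pt^[k] i == i)) then some (pt i)
      else none

/-- The top-trading-cycle rule. -/
noncomputable def ttc {n : ℕ} [NeZero n] (P : Fin n → Pref n) : Fin n → Fin n :=
  fun i => (((ttcStep P)^[n] (fun _ => none)) i).getD 0

/-! ### Obvious strategy-proofness on boxes -/

theorem reaches_trans_det {n : ℕ} {Γ : GameForm n} {s : Fin n → Strategy} {r h t : List ℕ}
    (hh : Γ.Reaches s r h) (ht : Γ.Reaches s r t) : Γ.Reaches s h t ∨ Γ.Reaches s t h := by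
  induction ht with
  | refl => exact Or.inr hh
  | step h1 h2 h3 ih =>
    rcases ih with ih | ih
    · exact Or.inl (.step ih h2 h3)
    · cases ih with
      | refl => exact Or.inl (.step (.refl _) h2 h3)
      | step g1 g2 g3 =>
        rename_i b e
        -- A nontrivial play leaving a history passes through the successor chosen there (`key`).
        right
        have key : ∀ u v : List ℕ, Γ.Reaches s u v → v = u ∨
            Γ.Reaches s (u ++ [s (Γ.player u) u]) v := by
          intro u v huv
          induction huv with
          | refl => exact Or.inl rfl
          | step k1 k2 k3 ik =>
            rcases ik with ik | ik
            · subst ik; exact Or.inr (.refl _)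
            · exact Or.inr (.step ik k2 k3)
        rcases key _ _ (GameForm.Reaches.step g1 g2 g3) with k | k
        · rw [k]
          exfalso
          have len : ∀ u v : List ℕ, Γ.Reaches s u v → u.length ≤ v.length := by
            intro u v huv
            induction huv with
            | refl => exact le_rfl
            | step k1 k2 k3 ik => simp; omega
          have := len _ _ g1
          have k' := congrArg List.length k
          simp at k'
          omega
        · exact k

theorem reaches_terminal {n : ℕ} {Γ : GameForm n} {s : Fin n → Strategy} {t h : List ℕ}
    (ht : Γ.Terminal t) (hr : Γ.Reaches s t h) : h = t := by
  induction hr with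
  | refl => rfl
  | step h1 h2 h3 ih => rw [ih] at h3; exact absurd ht h3

/-- On a box with (at most) two preferences per agent, an obviously strategy-proof rule is either
constant, or some agent's two preferences are separated: whatever the others report, the outcome
of either preference is weakly better, for that preference, than any outcome of the other. The
agent is the one moving at the first history where the planned choices are not all the same. -/
theorem osp_cut {n : ℕ} {D : Set (Pref n)} {f : (Fin n → Pref n) → (Fin n → Fin n)}
    (hosp : OSP D f) (P0 P1 : Fin n → Pref n) (h0 : inD D P0) (h1 : inD D P1) :
    (∀ P Q : Fin n → Pref n, (∀ i, P i = P0 i ∨ P i = P1 i) →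
        (∀ i, Q i = P0 i ∨ Q i = P1 i) → f P = f Q) ∨
    ∃ i, P0 i ≠ P1 i ∧ ∀ P Q : Fin n → Pref n, (∀ i, P i = P0 i ∨ P i = P1 i) →
        (∀ i, Q i = P0 i ∨ Q i = P1 i) → P i = P0 i → Q i = P1 i →
        P0 i (f P i) ≤ P0 i (f Q i) := by
  obtain ⟨Γ, S, hval, hobv, hplay⟩ := hosp
  have hin : ∀ P : Fin n → Pref n, (∀ i, P i = P0 i ∨ P i = P1 i) → inD D P := by
    intro P hP i
    rcases hP i with h | h <;> rw [h]
    · exact h0 i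
    · exact h1 i
  by_contra hcon
  push Not at hcon
  obtain ⟨⟨P, Q, hP, hQ, hne⟩, hcut⟩ := hcon
  have main : ∀ h, Γ.Reaches (fun j => S j (P0 j)) [] h →
      ∀ P : Fin n → Pref n, (∀ i, P i = P0 i ∨ P i = P1 i) →
        Γ.Reaches (fun j => S j (P j)) [] h := by
    intro h hr
    generalize hs : (fun j => S j (P0 j)) = s0 at hr
    generalize hroot : ([] : List ℕ) = r at hr
    induction hr with
    | refl => intro P _; subst hroot; exact .refl _
    | @step h' hh hmem hterm ih =>
      subst hroot
      intro P hP
      set i := Γ.player h' with hi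
      by_cases hEq : S i (P0 i) h' = S i (P1 i) h'
      · have hPi : s0 i h' = (fun j => S j (P j)) i h' := by
          subst hs
          rcases hP i with h | h
          · simp [h]
          · simp [h, hEq]
        rw [hPi]
        exact .step (ih P hP) hmem hterm
      · exfalso
        have hne : P0 i ≠ P1 i := fun h => hEq (by rw [h])
        obtain ⟨P, Q, hP, hQ, hPi, hQi, hlt⟩ := hcut i hne
        have node : ∀ R : Fin n → Pref n, (∀ i, R i = P0 i ∨ R i = P1 i) →
            Γ.ReachableNode i (S i (R i)) h' := fun R hR =>
          ⟨hmem, hterm, rfl, fun j => S j (R j), fun j => hval j _ (hin R hR j), rfl, ih R hR⟩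
        have feas : ∀ R : Fin n → Pref n, (∀ i, R i = P0 i ∨ R i = P1 i) →
            Γ.Feas i h' (S i (R i)) (f R i) := by
          intro R hR
          obtain ⟨t, ht, htt, hto⟩ := hplay R (hin R hR)
          refine ⟨fun j => S j (R j), fun j => hval j _ (hin R hR j), rfl, t, ?_, htt, by rw [hto]⟩
          rcases reaches_trans_det (ih R hR) ht with h | h
          · exact h
          · rw [reaches_terminal htt h] at hterm
            exact absurd htt hterm
        have hn := node P hP
        have hf := feas P hP
        rw [hPi] at hn hf
        have hn' := node Q hQ
        have hf' := feas Q hQ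
        rw [hQi] at hn' hf'
        have := hobv i (P0 i) (h0 i) (S i (P1 i)) (hval i _ (h1 i)) h' hn hn' hEq _ _ hf hf'
        exact absurd this (not_le.mpr hlt)
  obtain ⟨t0, ht0, htt0, _⟩ := hplay P0 h0
  have const : ∀ R : Fin n → Pref n, (∀ i, R i = P0 i ∨ R i = P1 i) → Γ.outcome t0 = f R := by
    intro R hR
    obtain ⟨t, ht, htt, hto⟩ := hplay R (hin R hR)
    rcases reaches_trans_det (main t0 ht0 R hR) ht with h | h
    · rw [← reaches_terminal htt0 h]; exact hto
    · rw [reaches_terminal htt h]; exact hto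
  exact hne ((const P hP).symm.trans (const Q hQ))

theorem osp_strategyProof {n : ℕ} {D : Set (Pref n)} {f : (Fin n → Pref n) → (Fin n → Fin n)}
    (hosp : OSP D f) : StrategyProof D f := by
  intro P hP i p' hp'
  have hP' : inD D (Function.update P i p') := by
    intro j
    by_cases h : j = i
    · subst h; simpa using hp'
    · simpa [h] using hP j
  rcases osp_cut hosp P (Function.update P i p') hP hP' with h | ⟨j, hj, h⟩
  · rw [weakPref, h P (Function.update P i p') (fun _ => Or.inl rfl) (fun _ => Or.inr rfl)]
  · have : j = i := by
      by_contra hne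
      simp [hne] at hj
    subst this
    exact h P (Function.update P j p') (fun _ => Or.inl rfl) (fun _ => Or.inr rfl) rfl rfl

/-! ### Ranks -/

theorem top_lt {n : ℕ} [NeZero n] {p : Pref n} {o o' : Fin n} (h : topObj p = o) (hne : o' ≠ o) :
    p o < p o' := by
  have h0 : p o = 0 := by rw [← h]; simp [topObj]
  have : p o' ≠ 0 := fun h' => hne (p.injective (h'.trans h0.symm))
  rw [h0]
  exact Fin.pos_iff_ne_zero.mpr this

theorem second_lt {n : ℕ} [NeZero n] {p : Pref n} {o o' z : Fin n} (hn : 3 ≤ n)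
    (h : topObj p = o) (h' : secondObj p = o') (hz : z ≠ o) (hz' : z ≠ o') : p o' < p z := by
  have h1 : p o' = 1 := by rw [← h']; simp [secondObj]
  have h2 := top_lt h hz
  have h3 : p z ≠ 1 := fun e => hz' (p.injective (e.trans h1.symm))
  rw [h1]
  have e1 : ((1 : Fin n) : ℕ) = 1 := by
    rw [Fin.val_one', Nat.mod_eq_of_lt (by omega)]
  have h4 : (p z : ℕ) ≠ 1 := fun e => h3 (Fin.ext (e.trans e1.symm))
  rw [Fin.lt_def] at h2 ⊢
  omega

theorem best_eq {n : ℕ} [NeZero n] {p : Pref n} {S : Finset (Fin n)} {o : Fin n} (ho : o ∈ S)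
    (h : ∀ o' ∈ S, o' ≠ o → p o < p o') : best p S = o := by
  unfold best
  cases hm : S.toList.argmin (fun o => p o) with
  | none =>
    rw [List.argmin_eq_none, Finset.toList_eq_nil] at hm
    simp [hm] at ho
  | some m =>
    have hmS : m ∈ S := Finset.mem_toList.mp (List.argmin_mem (Option.mem_def.mpr hm))
    have hle := List.le_of_mem_argmin (f := fun o => p o) (Finset.mem_toList.mpr ho)
      (Option.mem_def.mpr hm)
    by_contra hne
    exact absurd (h m hmS hne) (not_lt.mpr hle)

/-! ### Outcomes when only three agents can be active -/

section triple

set_option linter.unusedSectionVars false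

variable {n : ℕ} [NeZero n] {D : Set (Pref n)} {f : (Fin n → Pref n) → (Fin n → Fin n)}

/-- All agents other than `a, b, c` are null at `P`. -/
def NullOff (P : Fin n → Pref n) (a b c : Fin n) : Prop :=
  ∀ j, j ≠ a → j ≠ b → j ≠ c → topObj (P j) = j

theorem NullOff.rot {P : Fin n → Pref n} {a b c : Fin n} (h : NullOff P a b c) :
    NullOff P b c a := fun j h1 h2 h3 => h j h3 h1 h2

theorem NullOff.swap {P : Fin n → Pref n} {a b c : Fin n} (h : NullOff P a b c) :
    NullOff P b a c := fun j h1 h2 h3 => h j h2 h1 h3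

theorem fix_of_top (hir : IndRational D f) {P : Fin n → Pref n} (hP : inD D P) {j : Fin n}
    (h : topObj (P j) = j) : f P j = j := by
  by_contra hne
  exact absurd (top_lt h hne) (not_lt.mpr (hir P hP j))

theorem mem_triple (hrule : IsRule D f) (hir : IndRational D f) {P : Fin n → Pref n}
    (hP : inD D P) {a b c : Fin n} (hnull : NullOff P a b c) :
    f P a = a ∨ f P a = b ∨ f P a = c := by
  by_contra hcon
  push Not at hcon
  obtain ⟨h1, h2, h3⟩ := hcon
  have := fix_of_top hir hP (hnull _ h1 h2 h3)
  exact h1 ((hrule P hP).1 this)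

/-- If every agent of the triple ranks its successor in `a → b → c → a` first within the triple,
efficiency forces that trading cycle. -/
theorem out_rot (hrule : IsRule D f) (heff : Efficient D f) (hir : IndRational D f)
    {P : Fin n → Pref n} (hP : inD D P) {a b c : Fin n} (hab : a ≠ b) (hac : a ≠ c) (hbc : b ≠ c)
    (hnull : NullOff P a b c)
    (ha : P a b < P a a ∧ P a b < P a c) (hb : P b c < P b b ∧ P b c < P b a)
    (hc : P c a < P c c ∧ P c a < P c b) : f P a = b ∧ f P b = c ∧ f P c = a := by
  have h1 := mem_triple hrule hir hP hnull
  have h2 := mem_triple hrule hir hP hnull.rot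
  have h3 := mem_triple hrule hir hP hnull.rot.rot
  let m : Fin n → Fin n := fun i => if i = a then b else if i = b then c else if i = c then a else i
  have ma : m a = b := by simp [m]
  have mb : m b = c := by simp [m, hab.symm]
  have mc : m c = a := by simp [m, hac.symm, hbc.symm]
  have mo : ∀ j, j ≠ a → j ≠ b → j ≠ c → m j = j := by
    intro j h1 h2 h3
    simp [m, h1, h2, h3]
  have hm : Function.Bijective m := by
    apply Finite.injective_iff_bijective.mp
    intro i j hij
    simp only [m] at hij
    grind
  have la : P a (m a) ≤ P a (f P a) := by rw [ma]; rcases h1 with h | h | h <;> rw [h] <;> omega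
  have lb : P b (m b) ≤ P b (f P b) := by rw [mb]; rcases h2 with h | h | h <;> rw [h] <;> omega
  have lc : P c (m c) ≤ P c (f P c) := by rw [mc]; rcases h3 with h | h | h <;> rw [h] <;> omega
  have hall : ∀ i, weakPref (P i) (m i) (f P i) := by
    intro i
    by_cases ea : i = a
    · subst ea; exact la
    by_cases eb : i = b
    · subst eb; exact lb
    by_cases ec : i = c
    · subst ec; exact lc
    rw [mo i ea eb ec, fix_of_top hir hP (hnull i ea eb ec)]
    exact le_rfl
  have heq : ∀ i, f P i = m i := by
    intro i
    by_contra hne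
    refine heff P hP ⟨m, hm, hall, i, lt_of_le_of_ne (hall i) ?_⟩
    exact fun e => hne ((P i).injective e).symm
  exact ⟨(heq a).trans ma, (heq b).trans mb, (heq c).trans mc⟩

/-- Equity under unanimous acclaim when `a, b, c` are the active agents, `a` is acclaimed and
ranks `b` first within the triple. -/
theorem out_acclaimed (hequity : EquityUA D f)
    {P : Fin n → Pref n} (hP : inD D P) {a b c : Fin n} (hab : a ≠ b) (hac : a ≠ c) (hbc : b ≠ c)
    (hnull : NullOff P a b c)
    (ha : P a b < P a a ∧ P a b < P a c) (hb : P b a < P b b ∧ P b a < P b c)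
    (hc : P c a < P c c ∧ P c a < P c b) : f P a = b := by
  have nt : ∀ i o, P i o < P i i → topObj (P i) ≠ i := by
    intro i o h e
    have hne : o ≠ i := by rintro rfl; exact lt_irrefl _ h
    exact lt_asymm h (top_lt e hne)
  have hact : activeAgents P = {a, b, c} := by
    ext j
    simp only [activeAgents, Finset.mem_filter, Finset.mem_univ, true_and, Finset.mem_insert,
      Finset.mem_singleton]
    constructor
    · intro h
      by_contra hcon
      push Not at hcon
      exact h (hnull j hcon.1 hcon.2.1 hcon.2.2)
    · rintro (rfl | rfl | rfl)
      · exact nt _ _ ha.1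
      · exact nt _ _ hb.1
      · exact nt _ _ hc.1
  have ba : best (P a) {a, b, c} = b := by
    apply best_eq (by simp)
    intro o ho hne
    simp only [Finset.mem_insert, Finset.mem_singleton] at ho
    rcases ho with rfl | rfl | rfl
    · exact ha.1
    · exact absurd rfl hne
    · exact ha.2
  have bb : best (P b) {a, b, c} = a := by
    apply best_eq (by simp)
    intro o ho hne
    simp only [Finset.mem_insert, Finset.mem_singleton] at ho
    rcases ho with rfl | rfl | rfl
    · exact absurd rfl hne
    · exact hb.1
    · exact hb.2
  have bc : best (P c) {a, b, c} = a := by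
    apply best_eq (by simp)
    intro o ho hne
    simp only [Finset.mem_insert, Finset.mem_singleton] at ho
    rcases ho with rfl | rfl | rfl
    · exact absurd rfl hne
    · exact hc.2
    · exact hc.1
  have hacc : acclaimed P a := by
    refine ⟨?_, ?_, ?_, ?_⟩
    · rw [hact, Finset.card_eq_three.mpr ⟨a, b, c, hab, hac, hbc, rfl⟩]; omega
    · rw [hact]; simp
    · rw [hact, ba]; exact hab.symm
    · rw [hact]
      intro j hj hne
      simp only [Finset.mem_insert, Finset.mem_singleton] at hj
      rcases hj with rfl | rfl | rfl
      · exact absurd rfl hne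
      · exact bb
      · exact bc
  rw [hequity P hP a hacc, hact, ba]

/-- If `a` is acclaimed and receives `b`, and `b` ranks `a, b, c` in this order, then `a` and `b`
swap and `c` keeps its endowment. -/
theorem out_swap (hrule : IsRule D f) (hir : IndRational D f) (hequity : EquityUA D f)
    {P : Fin n → Pref n} (hP : inD D P) {a b c : Fin n} (hab : a ≠ b) (hac : a ≠ c) (hbc : b ≠ c)
    (hnull : NullOff P a b c)
    (ha : P a b < P a a ∧ P a b < P a c) (hb : P b a < P b b ∧ P b b < P b c)
    (hc : P c a < P c c ∧ P c a < P c b) : f P a = b ∧ f P b = a ∧ f P c = c := by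
  have h1 := out_acclaimed hequity hP hab hac hbc hnull ha ⟨hb.1, hb.1.trans hb.2⟩ hc
  have inj := (hrule P hP).1
  have h2 : f P b = a := by
    rcases mem_triple hrule hir hP hnull.rot with h | h | h
    · exact absurd (inj (h.trans h1.symm)) hab.symm
    · have := hir P hP b
      rw [weakPref, h] at this
      omega
    · exact h
  have h3 : f P c = c := by
    rcases mem_triple hrule hir hP hnull.rot.rot with h | h | h
    · exact h
    · exact absurd (inj (h.trans h2.symm)) hbc.symm
    · exact absurd (inj (h.trans h1.symm)) hac.symm
  exact ⟨h1, h2, h3⟩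

/-- The profile at which `a, b, c` report `x, y, z` and the others report `nl`. -/
def prof (nl : Fin n → Pref n) (a b c : Fin n) (x y z : Pref n) : Fin n → Pref n :=
  fun i => if i = a then x else if i = b then y else if i = c then z else nl i

section

variable {nl : Fin n → Pref n} {a b c : Fin n} {x y z : Pref n}

theorem prof_a : prof nl a b c x y z a = x := by simp [prof]
theorem prof_b (hab : a ≠ b) : prof nl a b c x y z b = y := by simp [prof, hab.symm]
theorem prof_c (hac : a ≠ c) (hbc : b ≠ c) : prof nl a b c x y z c = z := by
  simp [prof, hac.symm, hbc.symm]

theorem prof_inD (hnl : ∀ j, nl j ∈ D) (hx : x ∈ D) (hy : y ∈ D) (hz : z ∈ D) :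
    inD D (prof nl a b c x y z) := by
  intro i
  unfold prof
  split_ifs
  exacts [hx, hy, hz, hnl i]

theorem prof_null (hnl : ∀ j, topObj (nl j) = j) : NullOff (prof nl a b c x y z) a b c := by
  intro j h1 h2 h3
  simp [prof, h1, h2, h3, hnl]

theorem prof_update_b (hab : a ≠ b) (y' : Pref n) :
    Function.update (prof nl a b c x y z) b y' = prof nl a b c x y' z := by
  funext i
  by_cases h : i = b
  · subst h; simp [prof, hab.symm]
  · simp [prof, h]

theorem prof_update_c (hac : a ≠ c) (hbc : b ≠ c) (z' : Pref n) :
    Function.update (prof nl a b c x y z) c z' = prof nl a b c x y z' := by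
  funext i
  by_cases h : i = c
  · subst h; simp [prof, hac.symm, hbc.symm]
  · simp [prof, h]

theorem prof_swap (hbc : b ≠ c) : prof nl a b c x y z = prof nl a c b x z y := by
  funext i
  unfold prof
  grind

end

/-- `osp_cut` for the three agents `a, b, c`, the others being fixed. -/
theorem prof_cut (hosp : OSP D f) {nl : Fin n → Pref n} (hnl : ∀ j, nl j ∈ D) {a b c : Fin n}
    (hab : a ≠ b) (hac : a ≠ c) (hbc : b ≠ c) {x x' y y' z z' : Pref n}
    (hx : x ∈ D) (hx' : x' ∈ D) (hy : y ∈ D) (hy' : y' ∈ D) (hz : z ∈ D) (hz' : z' ∈ D) :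
    (∀ x1 x2 y1 y2 z1 z2, (x1 = x ∨ x1 = x') → (x2 = x ∨ x2 = x') → (y1 = y ∨ y1 = y') →
      (y2 = y ∨ y2 = y') → (z1 = z ∨ z1 = z') → (z2 = z ∨ z2 = z') →
      f (prof nl a b c x1 y1 z1) = f (prof nl a b c x2 y2 z2)) ∨
    (∀ y1 y2 z1 z2, (y1 = y ∨ y1 = y') → (y2 = y ∨ y2 = y') → (z1 = z ∨ z1 = z') →
      (z2 = z ∨ z2 = z') →
      x (f (prof nl a b c x y1 z1) a) ≤ x (f (prof nl a b c x' y2 z2) a)) ∨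
    (∀ x1 x2 z1 z2, (x1 = x ∨ x1 = x') → (x2 = x ∨ x2 = x') → (z1 = z ∨ z1 = z') →
      (z2 = z ∨ z2 = z') →
      y (f (prof nl a b c x1 y z1) b) ≤ y (f (prof nl a b c x2 y' z2) b)) ∨
    (∀ x1 x2 y1 y2, (x1 = x ∨ x1 = x') → (x2 = x ∨ x2 = x') → (y1 = y ∨ y1 = y') →
      (y2 = y ∨ y2 = y') →
      z (f (prof nl a b c x1 y1 z) c) ≤ z (f (prof nl a b c x2 y2 z') c)) := by
  have box : ∀ x1 y1 z1, (x1 = x ∨ x1 = x') → (y1 = y ∨ y1 = y') → (z1 = z ∨ z1 = z') →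
      ∀ i, prof nl a b c x1 y1 z1 i = prof nl a b c x y z i ∨
        prof nl a b c x1 y1 z1 i = prof nl a b c x' y' z' i := by
    intro x1 y1 z1 h1 h2 h3 i
    unfold prof
    split_ifs
    exacts [h1, h2, h3, Or.inl rfl]
  rcases osp_cut hosp (prof nl a b c x y z) (prof nl a b c x' y' z')
    (prof_inD hnl hx hy hz) (prof_inD hnl hx' hy' hz') with h | ⟨i, hi, h⟩
  · left
    intro x1 x2 y1 y2 z1 z2 g1 g2 g3 g4 g5 g6
    exact h _ _ (box _ _ _ g1 g3 g5) (box _ _ _ g2 g4 g6)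
  · right
    by_cases ea : i = a
    · subst ea
      left
      intro y1 y2 z1 z2 g3 g4 g5 g6
      have := h _ _ (box x y1 z1 (Or.inl rfl) g3 g5) (box x' y2 z2 (Or.inr rfl) g4 g6)
        (by simp only [prof_a]) (by simp only [prof_a])
      simpa only [prof_a] using this
    by_cases eb : i = b
    · subst eb
      right; left
      intro x1 x2 z1 z2 g3 g4 g5 g6
      have := h _ _ (box x1 y z1 g3 (Or.inl rfl) g5) (box x2 y' z2 g4 (Or.inr rfl) g6)
        (by simp only [prof_b hab]) (by simp only [prof_b hab])
      simpa only [prof_b hab] using this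
    by_cases ec : i = c
    · subst ec
      right; right
      intro x1 x2 y1 y2 g3 g4 g5 g6
      have := h _ _ (box x1 y1 z g3 g5 (Or.inl rfl)) (box x2 y2 z' g4 g6 (Or.inr rfl))
        (by simp only [prof_c hac hbc]) (by simp only [prof_c hac hbc])
      simpa only [prof_c hac hbc] using this
    · exfalso
      apply hi
      simp [prof, ea, eb, ec]

/-! ### Excluded restrictions to a triple -/

/-- Some preference in `D` ranks `x, y, z` in this order. -/
def Ranks (D : Set (Pref n)) (x y z : Fin n) : Prop := ∃ p ∈ D, p x < p y ∧ p y < p z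

/-- `D` does not contain a Condorcet cycle on three objects. The box consists of the two
non-null preferences available to each agent; each agent can be left with its endowment when
reporting the one that ranks the endowment last, while the other report can bring the object that
this preference ranks second. -/
theorem no_condorcet (hrule : IsRule D f) (heff : Efficient D f) (hir : IndRational D f)
    (hosp : OSP D f) (hequity : EquityUA D f) {nl : Fin n → Pref n} (hnl : ∀ j, nl j ∈ D)
    (hnt : ∀ j, topObj (nl j) = j) {a b c : Fin n}
    (hab : a ≠ b) (hac : a ≠ c) (hbc : b ≠ c) :
    ¬ (Ranks D a b c ∧ Ranks D b c a ∧ Ranks D c a b) := by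
  rintro ⟨⟨u, hu, u1, u2⟩, ⟨v, hv, v1, v2⟩, ⟨w, hw, w1, w2⟩⟩
  have rot : f (prof nl a b c w u v) a = c ∧ f (prof nl a b c w u v) c = b ∧
      f (prof nl a b c w u v) b = a := by
    refine out_rot hrule heff hir (prof_inD hnl hw hu hv) hac hab hbc.symm
      (prof_null hnt).rot.swap.rot.rot ?_ ?_ ?_ <;>
      simp only [prof_a, prof_b hab, prof_c hac hbc] <;> omega
  have ownA : f (prof nl a b c v w v) a = a := by
    refine (out_swap hrule hir hequity (prof_inD hnl hv hw hv) hbc hab.symm hac.symm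
      (prof_null hnt).rot ?_ ?_ ?_).2.2 <;>
      simp only [prof_a, prof_b hab, prof_c hac hbc] <;> omega
  have ownB : f (prof nl a b c w w u) b = b := by
    refine (out_swap hrule hir hequity (prof_inD hnl hw hw hu) hac.symm hbc.symm hab
      (prof_null hnt).rot.rot ?_ ?_ ?_).2.2 <;>
      simp only [prof_a, prof_b hab, prof_c hac hbc] <;> omega
  have ownC : f (prof nl a b c v u u) c = c := by
    refine (out_swap hrule hir hequity (prof_inD hnl hv hu hu) hab hac hbc
      (prof_null hnt) ?_ ?_ ?_).2.2 <;>
      simp only [prof_a, prof_b hab, prof_c hac hbc] <;> omega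
  rcases prof_cut hosp hnl hab hac hbc hv hw hw hu hu hv with h | h | h | h
  · have := h v w w u v v (by simp) (by simp) (by simp) (by simp) (by simp) (by simp)
    have := congrFun this a
    rw [ownA, rot.1] at this
    exact hac this
  · have := h w u v v (by simp) (by simp) (by simp) (by simp)
    rw [ownA, rot.1] at this
    omega
  · have := h w w u v (by simp) (by simp) (by simp) (by simp)
    rw [ownB, rot.2.2] at this
    omega
  · have := h v w u u (by simp) (by simp) (by simp) (by simp)
    rw [ownC, rot.2.1] at this
    omega

/-- With `abc`, `acb` and `cba` available, `b` keeps its endowment at `(cba, acb, abc)`: equity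
gives this at `(cba, abc, acb)`, and strategy-proofness carries it over, first for `c` and then
for `b`. -/
theorem own_aux (hrule : IsRule D f) (hir : IndRational D f)
    (hosp : OSP D f) (hequity : EquityUA D f) {nl : Fin n → Pref n} (hnl : ∀ j, nl j ∈ D)
    (hnt : ∀ j, topObj (nl j) = j) {a b c : Fin n}
    (hab : a ≠ b) (hac : a ≠ c) (hbc : b ≠ c) {p q s : Pref n} (hp : p ∈ D) (hq : q ∈ D)
    (hs : s ∈ D) (p1 : p a < p b) (p2 : p b < p c) (q1 : q a < q c) (q2 : q c < q b)
    (s1 : s c < s b) (s2 : s b < s a) : f (prof nl a b c s q p) b = b := by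
  have hsp := osp_strategyProof hosp
  have e1 : f (prof nl a b c s p q) c = a := by
    refine (out_swap hrule hir hequity (prof_inD hnl hs hp hq) hac hab hbc.symm
      (prof_null hnt).rot.swap.rot.rot ?_ ?_ ?_).2.1 <;>
      simp only [prof_a, prof_b hab, prof_c hac hbc] <;> omega
  have acc : ∀ y z, y ∈ D → z ∈ D → (y a < y b ∧ y a < y c) → (z a < z c ∧ z a < z b) →
      f (prof nl a b c s y z) a = c := by
    intro y z hy hz gy gz
    refine out_acclaimed hequity (prof_inD hnl hs hy hz) hac hab hbc.symm
      (prof_null hnt).rot.swap.rot.rot ?_ ?_ ?_ <;>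
      simp only [prof_a, prof_b hab, prof_c hac hbc] <;> omega
  have mem : ∀ y z, y ∈ D → z ∈ D → f (prof nl a b c s y z) b = b ∨
      f (prof nl a b c s y z) b = c ∨ f (prof nl a b c s y z) b = a := fun y z hy hz =>
    mem_triple hrule hir (prof_inD hnl hs hy hz) (prof_null hnt).rot
  have memc : ∀ y z, y ∈ D → z ∈ D → f (prof nl a b c s y z) c = c ∨
      f (prof nl a b c s y z) c = a ∨ f (prof nl a b c s y z) c = b := fun y z hy hz =>
    mem_triple hrule hir (prof_inD hnl hs hy hz) (prof_null hnt).rot.rot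
  have e2 : f (prof nl a b c s p p) c = a := by
    have := hsp _ (prof_inD (D := D) (a := a) (b := b) (c := c) hnl hs hp hp) c q hq
    rw [weakPref, prof_update_c hac hbc, prof_c hac hbc, e1] at this
    rcases memc p p hp hp with h | h | h
    · rw [h] at this; omega
    · exact h
    · rw [h] at this; omega
  have e3 : f (prof nl a b c s p p) b = b := by
    have inj := (hrule _ (prof_inD (D := D) (a := a) (b := b) (c := c) hnl hs hp hp)).1
    rcases mem p p hp hp with h | h | h
    · exact h
    · exact absurd (inj (h.trans (acc p p hp hp ⟨p1, by omega⟩ ⟨by omega, p1⟩).symm)) hab.symm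
    · exact absurd (inj (h.trans e2.symm)) hbc
  have inj := (hrule _ (prof_inD (D := D) (a := a) (b := b) (c := c) hnl hs hq hp)).1
  rcases mem q p hq hp with h | h | h
  · exact h
  · exact absurd (inj (h.trans (acc q p hq hp ⟨by omega, q1⟩ ⟨by omega, p1⟩).symm)) hab.symm
  · have := hsp _ (prof_inD (D := D) (a := a) (b := b) (c := c) hnl hs hp hp) b q hq
    rw [weakPref, prof_update_b hab, prof_b hab, e3, h] at this
    omega

/-- The preferences in `D` do not induce on a triple both orders with `a` first together with both
orders with `a` last. The box is
`{bca, cba} × {acb, cba} × {abc, bca}`. -/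
theorem no_two_sided (hrule : IsRule D f) (heff : Efficient D f) (hir : IndRational D f)
    (hosp : OSP D f) (hequity : EquityUA D f) {nl : Fin n → Pref n} (hnl : ∀ j, nl j ∈ D)
    (hnt : ∀ j, topObj (nl j) = j) {a b c : Fin n}
    (hab : a ≠ b) (hac : a ≠ c) (hbc : b ≠ c) :
    ¬ (Ranks D a b c ∧ Ranks D a c b ∧ Ranks D b c a ∧ Ranks D c b a) := by
  rintro ⟨⟨p, hp, p1, p2⟩, ⟨q, hq, q1, q2⟩, ⟨r, hr, r1, r2⟩, ⟨s, hs, s1, s2⟩⟩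
  have ownB : f (prof nl a b c s q p) b = b :=
    own_aux hrule hir hosp hequity hnl hnt hab hac hbc hp hq hs p1 p2 q1 q2 s1 s2
  have ownC : f (prof nl a b c r q p) c = c := by
    rw [prof_swap hbc]
    exact own_aux hrule hir hosp hequity hnl hnt hac hab hbc.symm hq hp hr q1 q2 p1 p2 r1 r2
  have ownA : f (prof nl a b c r s r) a = a := by
    refine (out_swap hrule hir hequity (prof_inD hnl hr hs hr) hbc hab.symm hac.symm
      (prof_null hnt).rot ?_ ?_ ?_).2.2 <;>
      simp only [prof_a, prof_b hab, prof_c hac hbc] <;> omega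
  have rot1 : f (prof nl a b c r s p) a = b ∧ f (prof nl a b c r s p) b = c ∧
      f (prof nl a b c r s p) c = a := by
    refine out_rot hrule heff hir (prof_inD hnl hr hs hp) hab hac hbc
      (prof_null hnt) ?_ ?_ ?_ <;>
      simp only [prof_a, prof_b hab, prof_c hac hbc] <;> omega
  have rot2 : f (prof nl a b c s q r) a = c ∧ f (prof nl a b c s q r) c = b ∧
      f (prof nl a b c s q r) b = a := by
    refine out_rot hrule heff hir (prof_inD hnl hs hq hr) hac hab hbc.symm
      (prof_null hnt).rot.swap.rot.rot ?_ ?_ ?_ <;>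
      simp only [prof_a, prof_b hab, prof_c hac hbc] <;> omega
  rcases prof_cut hosp hnl hab hac hbc hr hs hq hs hp hr with h | h | h | h
  · have := h r s s q r r (by simp) (by simp) (by simp) (by simp) (by simp) (by simp)
    have := congrFun this a
    rw [ownA, rot2.1] at this
    exact hac this
  · have := h s q r r (by simp) (by simp) (by simp) (by simp)
    rw [ownA, rot2.1] at this
    omega
  · have := h s r p p (by simp) (by simp) (by simp) (by simp)
    rw [ownB, rot1.2.1] at this
    omega
  · have := h r s q q (by simp) (by simp) (by simp) (by simp)
    rw [ownC, rot2.2.1] at this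
    omega

/-- No preference in `D` ranks `y` last among `x, y, z`. -/
def Mid (D : Set (Pref n)) (x y z : Fin n) : Prop := ∀ p ∈ D, p y < p x ∨ p y < p z

theorem exists_mid (hrule : IsRule D f) (heff : Efficient D f) (hir : IndRational D f)
    (hosp : OSP D f) (hequity : EquityUA D f) {nl : Fin n → Pref n} (hnl : ∀ j, nl j ∈ D)
    (hnt : ∀ j, topObj (nl j) = j) {a b c : Fin n}
    (hab : a ≠ b) (hac : a ≠ c) (hbc : b ≠ c) : Mid D b a c ∨ Mid D a b c ∨ Mid D a c b := by
  have C : ∀ {a b c : Fin n}, a ≠ b → a ≠ c → b ≠ c →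
      ¬ (Ranks D a b c ∧ Ranks D b c a ∧ Ranks D c a b) :=
    fun h1 h2 h3 => no_condorcet hrule heff hir hosp hequity hnl hnt h1 h2 h3
  have T : ∀ {a b c : Fin n}, a ≠ b → a ≠ c → b ≠ c →
      ¬ (Ranks D a b c ∧ Ranks D a c b ∧ Ranks D b c a ∧ Ranks D c b a) :=
    fun h1 h2 h3 => no_two_sided hrule heff hir hosp hequity hnl hnt h1 h2 h3
  have first : ∀ {a b c : Fin n}, a ≠ b → a ≠ c → b ≠ c → Ranks D a b c ∨ Ranks D a c b := by
    intro a b c hab hac hbc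
    rcases lt_or_gt_of_ne ((nl a).injective.ne hbc) with h | h
    · exact Or.inl ⟨nl a, hnl a, top_lt (hnt a) hab.symm, h⟩
    · exact Or.inr ⟨nl a, hnl a, top_lt (hnt a) hac.symm, h⟩
  have last : ∀ {a b c : Fin n}, a ≠ b → a ≠ c → b ≠ c → ¬ Mid D b a c →
      Ranks D b c a ∨ Ranks D c b a := by
    intro a b c hab hac hbc h
    unfold Mid at h
    push Not at h
    obtain ⟨p, hp, h1, h2⟩ := h
    have h1 := lt_of_le_of_ne h1 (p.injective.ne hab.symm)
    have h2 := lt_of_le_of_ne h2 (p.injective.ne hac.symm)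
    rcases lt_or_gt_of_ne (p.injective.ne hbc) with h | h
    · exact Or.inl ⟨p, hp, h, h2⟩
    · exact Or.inr ⟨p, hp, h, h1⟩
  by_contra hcon
  push Not at hcon
  obtain ⟨m1, m2, m3⟩ := hcon
  have l1 := last hab hac hbc m1
  have l2 := last hab.symm hbc hac m2
  have l3 := last hac.symm hbc.symm hab m3
  have f1 := first hab hac hbc
  have f2 := first hab.symm hbc hac
  have f3 := first hac.symm hbc.symm hab
  have c1 := C hab hac hbc
  have c2 := C hac hab hbc.symm
  have t1 := T hab hac hbc
  have t2 := T hab.symm hbc hac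
  have t3 := T hac.symm hbc.symm hab
  clear C T first last m1 m2 m3
  generalize Ranks D a b c = A1 at *
  generalize Ranks D a c b = A2 at *
  generalize Ranks D b a c = A3 at *
  generalize Ranks D b c a = A4 at *
  generalize Ranks D c a b = A5 at *
  generalize Ranks D c b a = A6 at *
  clear hrule heff hir hosp hequity
  by_cases A1 <;> by_cases A2 <;> by_cases A3 <;> by_cases A4 <;> by_cases A5 <;> by_cases A6 <;>
    simp_all only [not_true_eq_false, not_false_eq_true, and_true, and_false, or_true, or_false, and_self, or_self]

/-! ### Betweenness along the connectivity graph -/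

theorem adj_prefs {x y : Fin n} (h : (SimpleGraph.fromRel (connectedObj D)).Adj x y) :
    ∃ p ∈ D, topObj p = x ∧ secondObj p = y := by
  rw [SimpleGraph.fromRel_adj] at h
  rcases h.2 with ⟨p, hp, p', hp', h1, h2, h3, h4⟩ | ⟨p, hp, p', hp', h1, h2, h3, h4⟩
  · exact ⟨p, hp, h1, h2⟩
  · exact ⟨p', hp', h3, h4⟩

theorem mid_of_adj (hn : 3 ≤ n)
    (hmid : ∀ a b c : Fin n, a ≠ b → a ≠ c → b ≠ c → Mid D b a c ∨ Mid D a b c ∨ Mid D a c b)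
    {x y z : Fin n} (hxy : (SimpleGraph.fromRel (connectedObj D)).Adj x y)
    (hyz : (SimpleGraph.fromRel (connectedObj D)).Adj y z) (hxz : x ≠ z) : Mid D x y z := by
  obtain ⟨p, hp, p1, p2⟩ := adj_prefs hxy
  obtain ⟨q, hq, q1, q2⟩ := adj_prefs hyz.symm
  have a1 := top_lt p1 hxz.symm
  have a2 := second_lt hn p1 p2 hxz.symm hyz.ne.symm
  have b1 := top_lt q1 hxz
  have b2 := second_lt hn q1 q2 hxz hxy.ne
  rcases hmid x y z hxy.ne hxz hyz.ne with h | h | h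
  · have := h q hq; omega
  · exact h
  · have := h p hp; omega

theorem mid_trans
    (hmid : ∀ a b c : Fin n, a ≠ b → a ≠ c → b ≠ c → Mid D b a c ∨ Mid D a b c ∨ Mid D a c b)
    {nl : Fin n → Pref n} (hnl : ∀ j, nl j ∈ D) (hnt : ∀ j, topObj (nl j) = j)
    {a b c d : Fin n} (hab : a ≠ b) (had : a ≠ d) (hbd : b ≠ d)
    (hcd : c ≠ d) (h1 : Mid D a b c) (h2 : Mid D b c d) : Mid D a b d := by
  rcases hmid a b d hab had hbd with h | h | h
  · have g1 := h1 _ (hnl d)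
    have g2 := h2 _ (hnl d)
    have g3 := h _ (hnl d)
    have k1 := top_lt (hnt d) had
    have k3 := top_lt (hnt d) hcd
    omega
  · exact h
  · have g1 := h1 _ (hnl a)
    have g2 := h2 _ (hnl a)
    have g3 := h _ (hnl a)
    have k1 := top_lt (hnt a) hab.symm
    have k2 := top_lt (hnt a) had.symm
    omega

/-- Along a path `v, w, …, u` with `w ≠ u`, the vertex `w` is between `v` and `u`. -/
theorem mid_path (hn : 3 ≤ n)
    (hmid : ∀ a b c : Fin n, a ≠ b → a ≠ c → b ≠ c → Mid D b a c ∨ Mid D a b c ∨ Mid D a c b)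
    {nl : Fin n → Pref n} (hnl : ∀ j, nl j ∈ D) (hnt : ∀ j, topObj (nl j) = j)
    {w u : Fin n} (q : (SimpleGraph.fromRel (connectedObj D)).Walk w u) :
    ∀ {v : Fin n} (h : (SimpleGraph.fromRel (connectedObj D)).Adj v w),
      (SimpleGraph.Walk.cons h q).IsPath → w ≠ u → Mid D v w u := by
  induction q with
  | nil => intro v h _ hne; exact absurd rfl hne
  | @cons w x u h' q ih =>
    intro v h hp hne
    have hp' := (SimpleGraph.Walk.cons_isPath_iff h _).mp hp
    have hp'' := (SimpleGraph.Walk.cons_isPath_iff h' _).mp hp'.1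
    have hv : v ≠ w ∧ v ∉ q.support := by
      simpa [SimpleGraph.Walk.support_cons] using hp'.2
    have hvx : v ≠ x := fun e => hv.2 (e ▸ q.start_mem_support)
    have hvu : v ≠ u := fun e => hv.2 (e ▸ q.end_mem_support)
    have base := mid_of_adj hn hmid h h' hvx
    by_cases hxu : x = u
    · rw [← hxu]; exact base
    · exact mid_trans hmid hnl hnt h.ne hvu hne hxu base (ih h' hp'.1 hxu)

theorem exists_crossing {G : SimpleGraph (Fin n)} {p : Pref n} {o u t : Fin n} (W : G.Walk u t)
    (hu : p u < p o) (ht : p o < p t) (ho : o ∉ W.support) :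
    ∃ x y, G.Adj x y ∧ p x < p o ∧ p o < p y := by
  induction W with
  | nil => exact absurd (hu.trans ht) (lt_irrefl _)
  | @cons u v t h q ih =>
    rw [SimpleGraph.Walk.support_cons, List.mem_cons, not_or] at ho
    have hne : o ≠ v := fun e => ho.2 (e ▸ q.start_mem_support)
    rcases lt_or_gt_of_ne (p.injective.ne hne) with g | g
    · exact ⟨u, v, h, hu, g⟩
    · exact ih g ht ho.2

theorem reachable_of_chain (l : List (Fin n)) : ∀ o o' : Fin n, l.head? = some o →
    l.getLast? = some o' → l.IsChain (connectedObj D) →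
    (SimpleGraph.fromRel (connectedObj D)).Reachable o o' := by
  induction l with
  | nil => intro o o' h; simp at h
  | cons x l ih =>
    intro o o' h1 h2 h3
    cases l with
    | nil =>
      simp at h1 h2
      rw [← h1, ← h2]
    | cons y l =>
      rw [List.isChain_cons_cons] at h3
      have hx : x = o := by simpa using h1
      subst hx
      have hr := ih y o' rfl (by simpa using h2) h3.2
      by_cases hxy : x = y
      · rw [hxy]; exact hr
      · have hadj : (SimpleGraph.fromRel (connectedObj D)).Adj x y := by
          rw [SimpleGraph.fromRel_adj]
          exact ⟨hxy, Or.inl h3.1⟩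
        exact hadj.reachable.trans hr

theorem exists_top (hn : 3 ≤ n) (hpc : pathConnected D) (o : Fin n) :
    ∃ p ∈ D, topObj p = o := by
  have : Nontrivial (Fin n) := Fin.nontrivial_iff_two_le.mpr (by omega)
  obtain ⟨o', hne⟩ := exists_ne o
  obtain ⟨l, _, h1, h2, h3⟩ := hpc o o' hne.symm
  rcases l with _ | ⟨x, _ | ⟨y, l⟩⟩
  · simp at h1
  · simp at h1 h2
    exact absurd (h2.symm.trans h1) hne
  · obtain ⟨p, hp, _, _, ht, _⟩ := (List.isChain_cons_cons.mp h3).1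
    have hx : x = o := by simpa using h1
    exact ⟨p, hp, ht.trans hx⟩

end triple

theorem connectivity_graph_is_line (n : ℕ) [NeZero n] (hn : 3 ≤ n) (D : Set (Pref n))
    (hrich : richDomain D) (f : (Fin n → Pref n) → (Fin n → Fin n))
    (hrule : IsRule D f) (heff : Efficient D f) (hir : IndRational D f)
    (hosp : OSP D f) (hequity : EquityUA D f) :
    (SimpleGraph.fromRel (connectedObj D)).IsTree ∧
      ∀ p ∈ D, ∀ p' ∈ D, reversedPair p p' →
        ∀ W : (SimpleGraph.fromRel (connectedObj D)).Walk (topObj p) (topObj p'),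
          W.IsPath → ∀ o : Fin n, o ∈ W.support := by
  obtain ⟨hpc, _⟩ := hrich
  choose nl hnl hnt using exists_top hn hpc
  have hmid : ∀ a b c : Fin n, a ≠ b → a ≠ c → b ≠ c →
      Mid D b a c ∨ Mid D a b c ∨ Mid D a c b := fun a b c h1 h2 h3 =>
    exists_mid hrule heff hir hosp hequity hnl hnt h1 h2 h3
  refine ⟨⟨?_, ?_⟩, ?_⟩
  · rw [SimpleGraph.connected_iff]
    refine ⟨fun o o' => ?_, ⟨0⟩⟩
    by_cases h : o = o'
    · rw [h]
    · obtain ⟨l, _, h1, h2, h3⟩ := hpc o o' h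
      exact reachable_of_chain l o o' h1 h2 h3
  · intro u cyc hcyc
    cases cyc with
    | nil => exact hcyc.ne_nil rfl
    | @cons _ v _ h q =>
      obtain ⟨hq, he⟩ := (SimpleGraph.Walk.cons_isCycle_iff q h).mp hcyc
      cases q with
      | nil => exact h.ne rfl
      | @cons _ w _ h' q =>
        have hwu : w ≠ u := by
          rintro rfl
          apply he
          simp [Sym2.eq_swap]
        have m1 : Mid D v w u := mid_path hn hmid hnl hnt q h' hq hwu
        have m2 : Mid D u v w := mid_of_adj hn hmid h h' hwu.symm
        have g1 := m1 _ (hnl u)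
        have g2 := m2 _ (hnl u)
        have k1 := top_lt (hnt u) hwu
        have k2 := top_lt (hnt u) h.ne.symm
        omega
  · intro p hp p' hp' hrev W _ o
    by_contra ho
    have h1 : o ≠ topObj p := fun e => ho (e ▸ W.start_mem_support)
    have h2 : o ≠ topObj p' := fun e => ho (e ▸ W.end_mem_support)
    obtain ⟨x, y, hxy, hx, hy⟩ := exists_crossing W (top_lt rfl h1)
      ((hrev _ _).mpr (top_lt rfl h2)) ho
    have hx' : p' o < p' x := (hrev _ _).mp hx
    have hy' : p' y < p' o := (hrev _ _).mp hy
    have hxo : x ≠ o := by rintro rfl; exact lt_irrefl _ hx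
    have hyo : y ≠ o := by rintro rfl; exact lt_irrefl _ hy
    obtain ⟨q, hq, q1, q2⟩ := adj_prefs hxy
    have k1 := top_lt q1 hxo.symm
    have k2 := second_lt hn q1 q2 hxo.symm hyo.symm
    rcases hmid x y o hxy.ne hxo hyo with h | h | h
    · have := h p' hp'; omega
    · have := h p hp; omega
    · have := h q hq; omega
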